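/- arXiv:2405.06539 — 5 statements merged into one kernel-verified Lean document; each statement's English description precedes it below -/
import Mathlib

section
/- For the Poisson regression example, the objective F(θ) = −θ + exp(exp(θ) − 1) is not globally L-smooth and not (L₀,L₁)-smooth: there exists no finite constant L such that |F'(θ) − F'(θ')| ≤ L|θ − θ'| for all θ, θ' ∈ ℝ, and there exist no finite constants L₀, L₁ such that |F''(θ)| ≤ L₀ + L₁|F'(θ)| for all θ ∈ ℝ. -/
open Real

/-- The objective function of the Poisson regression example:
F(θ) = E[f(θ,Z)] = −θ + exp(exp(θ) − 1). -/
noncomputable def poissonObjective (θ : ℝ) : ℝ := -θ + Real.exp (Real.exp θ - 1)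

theorem hasDerivAt_poissonObjective (θ : ℝ) :
    HasDerivAt poissonObjective (-1 + exp (exp θ + θ - 1)) θ := by
  have h := (hasDerivAt_id' θ).neg.add ((Real.hasDerivAt_exp θ).sub_const 1).exp
  refine h.congr_deriv ?_
  rw [← Real.exp_add]
  ring_nf

theorem deriv_poissonObjective :
    deriv poissonObjective = fun θ => -1 + exp (exp θ + θ - 1) :=
  funext fun θ => (hasDerivAt_poissonObjective θ).deriv

theorem deriv_deriv_poissonObjective (θ : ℝ) :
    deriv (deriv poissonObjective) θ = (exp θ + 1) * exp (exp θ + θ - 1) := by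
  rw [deriv_poissonObjective]
  have h := ((((Real.hasDerivAt_exp θ).add (hasDerivAt_id' θ)).sub_const 1).exp).const_add (-1)
  exact h.deriv.trans (mul_comm _ _)

theorem quadratic_le_exp_exp_add_sub_one {θ : ℝ} (hθ : 0 ≤ θ) :
    1 + 2 * θ + 2 * θ ^ 2 ≤ exp (exp θ + θ - 1) := by
  have h₁ := Real.quadratic_le_exp_of_nonneg (x := 2 * θ) (by positivity)
  have h₂ : exp (2 * θ) ≤ exp (exp θ + θ - 1) :=
    Real.exp_le_exp.mpr (by linarith [Real.add_one_le_exp θ])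
  linarith

/-- The objective F(θ) = −θ + exp(exp(θ)−1) of the Poisson regression
example is not globally L-smooth and not (L₀,L₁)-smooth: there is no constant L such that
|F'(θ) − F'(θ')| ≤ L|θ−θ'| for all θ, θ', and there are no constants L₀, L₁ with
|F''(θ)| ≤ L₀ + L₁|F'(θ)| for all θ. -/
theorem stmt1 :
    (¬ ∃ L : ℝ, ∀ θ θ' : ℝ,
        |deriv poissonObjective θ - deriv poissonObjective θ'| ≤ L * |θ - θ'|) ∧
    (¬ ∃ L₀ L₁ : ℝ, ∀ θ : ℝ,
        |deriv (deriv poissonObjective) θ| ≤ L₀ + L₁ * |deriv poissonObjective θ|) := by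
  constructor
  · rintro ⟨L, hL⟩
    have hpos : 0 < |L| + 1 := by positivity
    have h := hL (|L| + 1) 0
    have hq := quadratic_le_exp_exp_add_sub_one hpos.le
    simp only [deriv_poissonObjective, Real.exp_zero, add_zero, sub_self, neg_add_cancel,
      sub_zero, abs_of_pos hpos] at h
    nlinarith [le_abs_self L, (le_abs_self _).trans h]
  · rintro ⟨L₀, L₁, hL⟩
    have hnonneg : 0 ≤ |L₀| + |L₁| := by positivity
    have h := hL (|L₀| + |L₁|)
    have hexp := Real.add_one_le_exp (|L₀| + |L₁|)
    have hq := quadratic_le_exp_exp_add_sub_one hnonneg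
    rw [deriv_deriv_poissonObjective, deriv_poissonObjective] at h
    beta_reduce at h
    set E := exp (exp (|L₀| + |L₁|) + (|L₀| + |L₁|) - 1)
    have hE : 1 ≤ E := by nlinarith
    rw [abs_of_nonneg (by positivity), abs_of_nonneg (show 0 ≤ -1 + E by linarith)] at h
    have h₀ : L₀ ≤ |L₀| * E := (le_abs_self L₀).trans (le_mul_of_one_le_right (abs_nonneg _) hE)
    have h₁ : L₁ * (-1 + E) ≤ |L₁| * E :=
      mul_le_mul (le_abs_self L₁) (by linarith) (by linarith) (abs_nonneg _)
    nlinarith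
end

section
/- For the Poisson regression example, there exists no finite constant C such that Var(∂_θ f(θ,Z)) ≤ C + C·(F'(θ))² for all θ ∈ ℝ, and there exists no finite constant C such that E[(∂_θ f(θ,Z))²] ≤ C + C·(F'(θ))² for all θ ∈ ℝ; in particular sup_{θ∈ℝ} Var(∂_θ f(θ,Z)) = ∞. -/
open MeasureTheory ProbabilityTheory Real

/-- The Laplace transform of the Poisson distribution of rate `1`. -/
lemma hasSum_poissonMeasure_one_exp_mul (t : ℝ) :
    HasSum (fun n : ℕ ↦ exp (-((1 : NNReal) : ℝ)) * ((1 : NNReal) : ℝ) ^ n / n.factorial *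
      exp (t * n)) (exp (exp t - 1)) := by
  convert! (NormedSpace.expSeries_div_hasSum_exp (exp t)).mul_left (exp (-1)) using 1
  · ext n
    rw [← Real.exp_nat_mul, mul_comm t]
    simp
    ring
  · rw [← exp_eq_exp_ℝ, ← exp_add]
    ring_nf

section

variable {Ω : Type*} [MeasurableSpace Ω] {P : Measure Ω} {X : Ω → ℕ}

lemma hasLaw_poissonMeasure_one (hXm : Measurable X)
    (hX : ∀ k : ℕ, P {ω | X ω = k} = ENNReal.ofReal (exp (-1) / k.factorial)) :
    HasLaw X (poissonMeasure 1) P where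
  aemeasurable := hXm.aemeasurable
  map_eq := by
    refine Measure.ext_of_singleton fun k ↦ ?_
    rw [Measure.map_apply hXm (measurableSet_singleton k), poissonMeasure_singleton]
    simpa [Set.preimage] using hX k

lemma integrable_exp_mul_of_poisson_one (hX : HasLaw X (poissonMeasure 1) P) (t : ℝ) :
    Integrable (fun ω ↦ exp (t * X ω)) P := by
  have h : Integrable (fun n : ℕ ↦ exp (t * n)) (poissonMeasure 1) := by
    rw [integrable_poissonMeasure_iff]
    simpa only [norm_eq_abs, abs_exp] using (hasSum_poissonMeasure_one_exp_mul t).summable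
  rw [← hX.map_eq] at h
  exact h.comp_aemeasurable hX.aemeasurable

lemma integral_exp_mul_of_poisson_one (hX : HasLaw X (poissonMeasure 1) P) (t : ℝ) :
    ∫ ω, exp (t * X ω) ∂P = exp (exp t - 1) := by
  have h := integral_map (μ := P) hX.aemeasurable (f := fun n : ℕ ↦ exp (t * n)) (by fun_prop)
  rw [← h, hX.map_eq, integral_poissonMeasure]
  exact (hasSum_poissonMeasure_one_exp_mul t).tsum_eq

lemma memLp_two_exp_mul_of_poisson_one (hX : HasLaw X (poissonMeasure 1) P) (t : ℝ) :
    MemLp (fun ω ↦ exp (t * X ω)) 2 P := by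
  rw [memLp_two_iff_integrable_sq (integrable_exp_mul_of_poisson_one hX t).aestronglyMeasurable]
  refine (integrable_exp_mul_of_poisson_one hX (2 * t)).congr (.of_forall fun ω ↦ ?_)
  simp only [← exp_nat_mul]
  push_cast
  ring_nf

end

lemma natCast_le_exp (n : ℕ) : (n : ℝ) ≤ exp n := by
  linarith [add_one_le_exp (n : ℝ)]

lemma natCast_mul_exp_mul_le (n : ℕ) (t : ℝ) : n * exp (t * n) ≤ exp ((t + 1) * n) := by
  rw [add_mul, exp_add, one_mul, mul_comm]
  gcongr
  exact natCast_le_exp n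

lemma natCast_mul_natCast_le_exp_add_exp (m n : ℕ) :
    (m * n : ℝ) ≤ exp (2 * m) + exp (2 * n) := by
  have hsq (k : ℕ) : (k : ℝ) ^ 2 ≤ exp (2 * k) := by
    rw [show (2 : ℝ) * k = (2 : ℕ) * (k : ℝ) by norm_num, exp_nat_mul]
    gcongr
    exact natCast_le_exp k
  nlinarith [hsq m, hsq n, sq_nonneg ((m : ℝ) - n)]

lemma exp_two_mul_sub_one_le_sq (n : ℕ) (t : ℝ) :
    exp (2 * t * n) - 1 ≤ (n * exp (t * n)) ^ 2 := by
  rcases Nat.eq_zero_or_pos n with rfl | hn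
  · simp
  · have h1 : (1 : ℝ) ≤ n := by exact_mod_cast hn
    have h2 : exp (2 * t * n) = exp (t * n) ^ 2 := by
      rw [← exp_nat_mul]
      push_cast
      ring_nf
    rw [h2, mul_pow]
    nlinarith [sq_nonneg (exp (t * n)), one_le_pow₀ h1 (n := 2)]

/-- `exp (u ^ 2)` outgrows `exp (6 * u)`. -/
lemma exists_add_mul_exp_lt_exp_sq (D : ℝ) :
    ∃ u : ℝ, 1 ≤ u ∧ D + D * exp (6 * u) < exp (u ^ 2 - 1) := by
  refine ⟨2 * |D| + 8, by linarith [abs_nonneg D], ?_⟩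
  set u := 2 * |D| + 8 with hu
  have hu8 : 8 ≤ u := by linarith [abs_nonneg D]
  have h1 : exp (6 * u) * exp u ≤ exp (u ^ 2 - 1) := by
    rw [← exp_add]
    gcongr
    nlinarith
  have h2 : 2 * |D| < exp u := by linarith [add_one_le_exp u]
  have h3 : 1 ≤ exp (6 * u) := one_le_exp (by linarith)
  nlinarith [le_abs_self D, abs_nonneg D]

/-- The gradient of the Poisson regression loss has variance at least
`exp (u ^ 2 - 1) / 2 - K - 2 * exp (6 * u)`, where `u = exp θ`. -/
lemma exists_le_variance_poissonRegression {Ω : Type*} [MeasurableSpace Ω] {P : Measure Ω}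
    [IsProbabilityMeasure P] {X Y : Ω → ℕ} (hXm : Measurable X) (hYm : Measurable Y)
    (hX : HasLaw X (poissonMeasure 1) P) (hY : HasLaw Y (poissonMeasure 1) P) :
    ∃ K : ℝ, ∀ θ : ℝ,
      MemLp (fun ω ↦ -(X ω : ℝ) * Y ω + X ω * exp (θ * X ω)) 2 P ∧
      exp (exp θ ^ 2 - 1) / 2 - K - 2 * exp (6 * exp θ) ≤
        variance (fun ω ↦ -(X ω : ℝ) * Y ω + X ω * exp (θ * X ω)) P := by
  have hA : MemLp (fun ω ↦ (X ω * Y ω : ℝ)) 2 P := by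
    refine ((memLp_two_exp_mul_of_poisson_one hX 2).add
      (memLp_two_exp_mul_of_poisson_one hY 2)).mono (by fun_prop) (.of_forall fun ω ↦ ?_)
    rw [norm_of_nonneg (by positivity), Pi.add_apply, norm_of_nonneg (by positivity)]
    exact natCast_mul_natCast_le_exp_add_exp _ _
  refine ⟨1 / 2 + (∫ ω, (X ω * Y ω : ℝ) ^ 2 ∂P) + 2 * (∫ ω, (X ω * Y ω : ℝ) ∂P) ^ 2,
    fun θ ↦ ?_⟩
  have hB : MemLp (fun ω ↦ X ω * exp (θ * X ω)) 2 P := by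
    refine (memLp_two_exp_mul_of_poisson_one hX (θ + 1)).mono (by fun_prop)
      (.of_forall fun ω ↦ ?_)
    rw [norm_of_nonneg (by positivity), norm_of_nonneg (by positivity)]
    exact natCast_mul_exp_mul_le _ _
  have hG : MemLp (fun ω ↦ -(X ω : ℝ) * Y ω + X ω * exp (θ * X ω)) 2 P := by
    refine (hB.sub hA).ae_eq (.of_forall fun ω ↦ ?_)
    simp only [Pi.sub_apply]
    ring
  refine ⟨hG, ?_⟩
  have hmean : ∫ ω, (-(X ω : ℝ) * Y ω + X ω * exp (θ * X ω)) ∂P =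
      (∫ ω, X ω * exp (θ * X ω) ∂P) - ∫ ω, (X ω * Y ω : ℝ) ∂P := by
    rw [← integral_sub (hB.integrable (by norm_num)) (hA.integrable (by norm_num))]
    exact integral_congr_ae (.of_forall fun ω ↦ by ring)
  have hB0 : 0 ≤ ∫ ω, X ω * exp (θ * X ω) ∂P := integral_nonneg fun ω ↦ by positivity
  have hB1 : ∫ ω, X ω * exp (θ * X ω) ∂P ≤ exp (3 * exp θ) := by
    calc ∫ ω, X ω * exp (θ * X ω) ∂P ≤ ∫ ω, exp ((θ + 1) * X ω) ∂P :=
          integral_mono (hB.integrable (by norm_num)) (integrable_exp_mul_of_poisson_one hX _)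
            fun ω ↦ natCast_mul_exp_mul_le _ _
      _ = exp (exp (θ + 1) - 1) := integral_exp_mul_of_poisson_one hX _
      _ ≤ exp (3 * exp θ) := by
          rw [exp_le_exp, exp_add]
          nlinarith [exp_pos θ, exp_one_lt_d9]
  have hBsq : (∫ ω, X ω * exp (θ * X ω) ∂P) ^ 2 ≤ exp (6 * exp θ) := by
    calc _ ≤ exp (3 * exp θ) ^ 2 := by gcongr
      _ = exp (6 * exp θ) := by
          rw [← exp_nat_mul]
          push_cast
          ring_nf
  have hsecond : (exp (exp θ ^ 2 - 1) - 1) / 2 - ∫ ω, (X ω * Y ω : ℝ) ^ 2 ∂P ≤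
      ∫ ω, (-(X ω : ℝ) * Y ω + X ω * exp (θ * X ω)) ^ 2 ∂P := by
    have hexp := integrable_exp_mul_of_poisson_one hX (2 * θ)
    have hsub : Integrable (fun ω ↦ (exp (2 * θ * X ω) - 1) / 2) P :=
      (hexp.sub (integrable_const 1)).div_const 2
    have hval : ∫ ω, (exp (2 * θ * X ω) - 1) / 2 ∂P = (exp (exp θ ^ 2 - 1) - 1) / 2 := by
      rw [integral_div, integral_sub hexp (integrable_const 1),
        integral_exp_mul_of_poisson_one hX, ← exp_nat_mul]
      simp
    rw [← hval, ← integral_sub hsub hA.integrable_sq]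
    refine integral_mono (hsub.sub hA.integrable_sq) hG.integrable_sq fun ω ↦ ?_
    have := exp_two_mul_sub_one_le_sq (X ω) θ
    nlinarith [sq_nonneg (X ω * exp (θ * X ω) - 2 * (X ω * Y ω : ℝ))]
  rw [variance_eq_sub hG, hmean]
  simp only [Pi.pow_apply]
  nlinarith [sq_nonneg ((∫ ω, X ω * exp (θ * X ω) ∂P) + ∫ ω, (X ω * Y ω : ℝ) ∂P)]

/-- For the Poisson regression example (X, Y independent Poisson(1),
∂_θ f(θ,(x,y)) = −x·y + x·exp(θ·x), F'(θ) = −1 + exp(exp(θ)+θ−1)): there is no constant C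
such that Var(∂_θ f(θ,Z)) ≤ C + C·F'(θ)² for all θ, there is no constant C such that
E[(∂_θ f(θ,Z))²] ≤ C + C·F'(θ)² for all θ, and sup_θ Var(∂_θ f(θ,Z)) = ∞. -/
theorem stmt2
    {Ω : Type*} [MeasureSpace Ω] [IsProbabilityMeasure (ℙ : Measure Ω)]
    (X Y : Ω → ℕ) (hXm : Measurable X) (hYm : Measurable Y)
    (hindep : IndepFun X Y ℙ)
    (hX : ∀ k : ℕ, ℙ {ω | X ω = k} = ENNReal.ofReal (Real.exp (-1) / (Nat.factorial k)))
    (hY : ∀ k : ℕ, ℙ {ω | Y ω = k} = ENNReal.ofReal (Real.exp (-1) / (Nat.factorial k)))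
    (g : ℝ → Ω → ℝ)
    (hg : ∀ θ : ℝ, ∀ ω : Ω,
      g θ ω = -(X ω : ℝ) * (Y ω : ℝ) + (X ω : ℝ) * Real.exp (θ * (X ω : ℝ)))
    (F' : ℝ → ℝ) (hF' : ∀ θ : ℝ, F' θ = -1 + Real.exp (Real.exp θ + θ - 1)) :
    (¬ ∃ C : ℝ, ∀ θ : ℝ, variance (g θ) ℙ ≤ C + C * (F' θ) ^ 2) ∧
    (¬ ∃ C : ℝ, ∀ θ : ℝ, (∫ ω, (g θ ω) ^ 2 ∂ℙ) ≤ C + C * (F' θ) ^ 2) ∧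
    (∀ C : ℝ, ∃ θ : ℝ, C < variance (g θ) ℙ) := by
  obtain ⟨K, hK⟩ := exists_le_variance_poissonRegression hXm hYm
    (hasLaw_poissonMeasure_one hXm hX) (hasLaw_poissonMeasure_one hYm hY)
  simp only [← hg] at hK
  have key (C : ℝ) : ∃ θ : ℝ, |C| + |C| * F' θ ^ 2 < variance (g θ) ℙ := by
    obtain ⟨u, hu, hD⟩ := exists_add_mul_exp_lt_exp_sq (2 * |K| + 6 * |C| + 4)
    refine ⟨log u, lt_of_lt_of_le ?_ (hK (log u)).2⟩
    rw [hF', exp_log (by linarith)]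
    have hF : (-1 + exp (u + log u - 1)) ^ 2 ≤ 2 + 2 * exp (6 * u) := by
      have h1 : exp (u + log u - 1) ^ 2 ≤ exp (6 * u) := by
        rw [← exp_nat_mul, exp_le_exp]
        push_cast
        linarith [log_le_sub_one_of_pos (by linarith : 0 < u)]
      nlinarith [sq_nonneg (1 + exp (u + log u - 1))]
    nlinarith [mul_le_mul_of_nonneg_left hF (abs_nonneg C), le_abs_self K, abs_nonneg K,
      mul_nonneg (abs_nonneg K) (exp_pos (6 * u)).le,
      mul_nonneg (abs_nonneg C) (exp_pos (6 * u)).le, abs_nonneg C]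
  have hle (C θ : ℝ) : C + C * F' θ ^ 2 ≤ |C| + |C| * F' θ ^ 2 := by
    gcongr <;> exact le_abs_self C
  refine ⟨?_, ?_, fun C ↦ ?_⟩
  · rintro ⟨C, hC⟩
    obtain ⟨θ, hθ⟩ := key C
    linarith [hC θ, hle C θ]
  · rintro ⟨C, hC⟩
    obtain ⟨θ, hθ⟩ := key C
    have hvar : variance (g θ) ℙ ≤ ∫ ω, (g θ ω) ^ 2 ∂ℙ :=
      variance_le_expectation_sq (hK θ).1.aestronglyMeasurable
    linarith [hC θ, hle C θ]
  · obtain ⟨θ, hθ⟩ := key C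
    exact ⟨θ, by linarith [le_abs_self C, mul_nonneg (abs_nonneg C) (sq_nonneg (F' θ))]⟩
end

section
/- For the Poisson regression example, for every α ∈ (0,1] and every ε > 0 one has liminf_{θ→∞} [ 𝓛_{α,ε}(θ)·G_α(θ) / ( F(θ) + |F'(θ)|² ) ] = ∞, where G_α(θ) := E[|∂_θ f(θ,Z)|^{1+α}] and 𝓛_{α,ε}(θ) is the smallest constant L ∈ (0,∞) such that |F'(θ) − F'(θ')| ≤ L·|θ − θ'|^α for all θ' with |θ' − θ| ≤ (max(G_α(θ), ε))^{1/(1+α)}. (Consequently, Assumption 5 of Patel and Berahas (2022) used to establish the convergence of stochastic gradient fails for every α ∈ (0,1].) -/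
open MeasureTheory ProbabilityTheory Real Filter

/-- A continuously differentiable real function is Hölder of every exponent `α ∈ (0, 1]` on bounded
intervals. -/
theorem exists_holder_constant_of_contDiff {f : ℝ → ℝ} (hf : ContDiff ℝ 1 f) {α : ℝ}
    (hα : α ∈ Set.Ioc (0 : ℝ) 1) (x R : ℝ) :
    ∃ l : ℝ, 0 < l ∧ ∀ y : ℝ, |y - x| ≤ R → |f x - f y| ≤ l * |x - y| ^ α := by
  obtain ⟨C, hC⟩ := (isCompact_Icc (a := x - R) (b := x + R)).exists_bound_of_continuousOn
    (hf.continuous_deriv le_rfl).continuousOn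
  refine ⟨(|C| + 1) * (|R| + 1) ^ (1 - α), by positivity, fun y hy => ?_⟩
  have hyx := abs_le.1 hy
  have hR : 0 ≤ R := (abs_nonneg _).trans hy
  have hlip : |f x - f y| ≤ C * |x - y| :=
    (convex_Icc (x - R) (x + R)).norm_image_sub_le_of_norm_deriv_le
      (fun z _ => (hf.differentiable one_ne_zero) z) hC
      ⟨by linarith, by linarith⟩ ⟨by linarith, by linarith⟩
  have hle : |x - y| ≤ |R| + 1 := by
    rw [abs_sub_comm]; linarith [le_abs_self R]
  have hsplit : |x - y| = |x - y| ^ (1 - α) * |x - y| ^ α := by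
    rw [← Real.rpow_add' (abs_nonneg _) (by simp)]; simp
  calc |f x - f y| ≤ C * |x - y| := hlip
    _ ≤ (|C| + 1) * |x - y| := by gcongr; linarith [le_abs_self C]
    _ = (|C| + 1) * (|x - y| ^ (1 - α) * |x - y| ^ α) := by rw [← hsplit]
    _ ≤ (|C| + 1) * ((|R| + 1) ^ (1 - α) * |x - y| ^ α) := by
        gcongr
        linarith [hα.2]
    _ = _ := by ring

/-- A Poisson variable of mean one has finite exponential moments. -/
theorem integrable_exp_mul_of_poisson_one_s3 {Ω : Type*} [MeasurableSpace Ω] {μ : Measure Ω}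
    {X : Ω → ℕ} (hXm : Measurable X)
    (hX : ∀ k : ℕ, μ {ω | X ω = k} = ENNReal.ofReal (Real.exp (-1) / (Nat.factorial k)))
    (t : ℝ) : Integrable (fun ω => Real.exp (t * X ω)) μ := by
  refine ⟨by fun_prop, ?_⟩
  have hmap : ∫⁻ ω, ‖Real.exp (t * X ω)‖ₑ ∂μ =
      ∑' k : ℕ, ENNReal.ofReal (Real.exp (-1) * (Real.exp t ^ k / (Nat.factorial k))) := by
    rw [← lintegral_map (f := fun k : ℕ => ‖Real.exp (t * k)‖ₑ) (measurable_of_countable _) hXm,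
      lintegral_countable']
    refine tsum_congr fun k => ?_
    rw [Measure.map_apply hXm (measurableSet_singleton k)]
    change _ * μ {ω | X ω = k} = _
    rw [hX, Real.enorm_of_nonneg (Real.exp_pos _).le, ← ENNReal.ofReal_mul (Real.exp_pos _).le,
      mul_comm t, Real.exp_nat_mul]
    congr 1; ring
  rw [HasFiniteIntegral, hmap]
  exact ((Real.summable_pow_div_factorial (Real.exp t)).mul_left _).tsum_ofReal_lt_top

/-- The pointwise bound dominating the gradient moment of the Poisson regression loss. -/
theorem abs_poisson_gradient_rpow_le (m n : ℕ) {α θ : ℝ} (hα : α ∈ Set.Ioc (0 : ℝ) 1)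
    (hθ : 0 ≤ θ) :
    |(-(m : ℝ) * n + m * Real.exp (θ * m))| ^ (1 + α) ≤
      Real.exp (2 * (1 + θ) * m) * Real.exp (2 * n) := by
  have hm : (m : ℝ) ≤ Real.exp m := by linarith [Real.add_one_le_exp (m : ℝ)]
  have hn : (n : ℝ) ≤ Real.exp n := by linarith [Real.add_one_le_exp (n : ℝ)]
  have hn1 : 1 ≤ Real.exp n := Real.one_le_exp (by positivity)
  have hθ1 : 1 ≤ Real.exp (θ * m) := Real.one_le_exp (by positivity)
  have hm1 : 1 ≤ Real.exp m := Real.one_le_exp (by positivity)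
  have hmn : (m : ℝ) * n ≤ Real.exp m * Real.exp n * Real.exp (θ * m) :=
    (mul_le_mul hm hn (by positivity) (by positivity)).trans
      (le_mul_of_one_le_right (by positivity) hθ1)
  have hme : (m : ℝ) * Real.exp (θ * m) ≤ Real.exp m * Real.exp n * Real.exp (θ * m) := by
    gcongr
    exact hm.trans (le_mul_of_one_le_right (by positivity) hn1)
  have hone : 1 ≤ Real.exp m * Real.exp n * Real.exp (θ * m) :=
    one_le_mul_of_one_le_of_one_le (one_le_mul_of_one_le_of_one_le hm1 hn1) hθ1
  have habs : |(-(m : ℝ) * n + m * Real.exp (θ * m))| ≤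
      Real.exp m * Real.exp n * Real.exp (θ * m) := by
    have h₁ : 0 ≤ (m : ℝ) * n := by positivity
    have h₂ : 0 ≤ (m : ℝ) * Real.exp (θ * m) := by positivity
    rw [abs_le]
    constructor <;> linarith
  calc |(-(m : ℝ) * n + m * Real.exp (θ * m))| ^ (1 + α)
      ≤ (Real.exp m * Real.exp n * Real.exp (θ * m)) ^ (1 + α) :=
        Real.rpow_le_rpow (abs_nonneg _) habs (by linarith [hα.1])
    _ ≤ (Real.exp m * Real.exp n * Real.exp (θ * m)) ^ (2 : ℝ) :=
        Real.rpow_le_rpow_of_exponent_le hone (by linarith [hα.2])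
    _ = _ := by
        rw [← Real.exp_add, ← Real.exp_add, ← Real.exp_mul, ← Real.exp_add]
        congr 1; ring

/-- For `θ ≥ 2` the gradient moment of the Poisson regression loss is at least one. -/
theorem one_le_integral_poisson_gradient_rpow {Ω : Type*} [MeasurableSpace Ω] {μ : Measure Ω}
    [IsFiniteMeasure μ] {X Y : Ω → ℕ} (hXm : Measurable X) (hYm : Measurable Y)
    (hindep : IndepFun X Y μ)
    (hX : ∀ k : ℕ, μ {ω | X ω = k} = ENNReal.ofReal (Real.exp (-1) / (Nat.factorial k)))
    (hY : ∀ k : ℕ, μ {ω | Y ω = k} = ENNReal.ofReal (Real.exp (-1) / (Nat.factorial k)))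
    {α θ : ℝ} (hα : α ∈ Set.Ioc (0 : ℝ) 1) (hθ : 2 ≤ θ) :
    1 ≤ ∫ ω, |(-(X ω : ℝ) * (Y ω : ℝ) + (X ω : ℝ) * Real.exp (θ * (X ω : ℝ)))| ^ (1 + α) ∂μ := by
  have hdom : Integrable
      (fun ω => Real.exp (2 * (1 + θ) * X ω) * Real.exp (2 * Y ω)) μ :=
    (hindep.comp (φ := fun k : ℕ => Real.exp (2 * (1 + θ) * k))
      (ψ := fun k : ℕ => Real.exp (2 * k)) (measurable_of_countable _)
      (measurable_of_countable _)).integrable_mul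
      (integrable_exp_mul_of_poisson_one_s3 hXm hX _) (integrable_exp_mul_of_poisson_one_s3 hYm hY _)
  have hint : Integrable (fun ω =>
      |(-(X ω : ℝ) * (Y ω : ℝ) + (X ω : ℝ) * Real.exp (θ * (X ω : ℝ)))| ^ (1 + α)) μ := by
    refine hdom.mono' (Measurable.aestronglyMeasurable (by fun_prop)) (Eventually.of_forall fun ω => ?_)
    rw [Real.norm_of_nonneg (by positivity)]
    exact abs_poisson_gradient_rpow_le _ _ hα (by linarith)
  set s : Set Ω := X ⁻¹' {1} ∩ Y ⁻¹' {0} with hs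
  have hsm : MeasurableSet s :=
    (hXm (measurableSet_singleton 1)).inter (hYm (measurableSet_singleton 0))
  have hμs : μ.real s = Real.exp (-2) := by
    have hXs : μ (X ⁻¹' {1}) = ENNReal.ofReal (Real.exp (-1)) :=
      (hX 1).trans (by simp)
    have hYs : μ (Y ⁻¹' {0}) = ENNReal.ofReal (Real.exp (-1)) :=
      (hY 0).trans (by simp)
    rw [Measure.real, hs, hindep.measure_inter_preimage_eq_mul _ _ (measurableSet_singleton 1)
      (measurableSet_singleton 0), hXs, hYs, ← ENNReal.ofReal_mul (Real.exp_pos _).le,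
      ← Real.exp_add, ENNReal.toReal_ofReal (Real.exp_pos _).le]
    norm_num
  calc (1 : ℝ) ≤ Real.exp (-2) * Real.exp (θ * (1 + α)) := by
        rw [← Real.exp_add]
        exact Real.one_le_exp (by nlinarith [hα.1])
    _ = ∫ _ω in s, Real.exp (θ * (1 + α)) ∂μ := by
        rw [setIntegral_const, hμs, smul_eq_mul]
    _ = ∫ ω in s,
        |(-(X ω : ℝ) * (Y ω : ℝ) + (X ω : ℝ) * Real.exp (θ * (X ω : ℝ)))| ^ (1 + α) ∂μ := by
        refine setIntegral_congr_fun hsm fun ω hω => ?_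
        have hXω : X ω = 1 := hω.1
        have hYω : Y ω = 0 := hω.2
        simp [hXω, hYω, Real.exp_mul]
    _ ≤ _ := setIntegral_le_integral hint (Eventually.of_forall fun ω => by positivity)

/-- The increment of `F'` over a unit step outgrows `F + |F'| ^ 2`. -/
theorem poisson_increment_ratio_ge {θ : ℝ} (hθ : 6 ≤ θ) :
    0 < -θ + Real.exp (Real.exp θ - 1) + |-1 + Real.exp (Real.exp θ + θ - 1)| ^ 2 ∧
    θ / 4 * (-θ + Real.exp (Real.exp θ - 1) + |-1 + Real.exp (Real.exp θ + θ - 1)| ^ 2) ≤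
      (-1 + Real.exp (Real.exp (θ + 1) + (θ + 1) - 1)) -
        (-1 + Real.exp (Real.exp θ + θ - 1)) := by
  have hs : 1 + θ + θ ^ 2 / 2 ≤ Real.exp θ := Real.quadratic_le_exp_of_nonneg (by linarith)
  have he : 2.7 < Real.exp 1 := by linarith [Real.exp_one_gt_d9]
  have hstep : Real.exp (θ + 1) = Real.exp 1 * Real.exp θ := by rw [Real.exp_add, mul_comm]
  set s := Real.exp θ with hsdef
  set E := Real.exp (2 * s + 2 * θ) with hE
  have hEpos : 0 < E := Real.exp_pos _
  have hlow : 0 < -θ + Real.exp (s - 1) := by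
    nlinarith [Real.add_one_le_exp (s - 1)]
  have hone : 1 ≤ Real.exp (s + θ - 1) := Real.one_le_exp (by nlinarith)
  have hF : -θ + Real.exp (s - 1) ≤ E := by
    have : Real.exp (s - 1) ≤ E := Real.exp_le_exp.2 (by nlinarith)
    linarith
  have hF' : |-1 + Real.exp (s + θ - 1)| ^ 2 ≤ E := by
    rw [abs_of_nonneg (by linarith)]
    calc (-1 + Real.exp (s + θ - 1)) ^ 2 ≤ Real.exp (s + θ - 1) ^ 2 :=
          pow_le_pow_left₀ (by linarith) (by linarith) 2
      _ = Real.exp (2 * (s + θ - 1)) := by rw [← Real.exp_nat_mul]; norm_num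
      _ ≤ E := Real.exp_le_exp.2 (by linarith)
  have hgrow : θ * E ≤ Real.exp (Real.exp (θ + 1) + (θ + 1) - 1) := by
    calc θ * E ≤ Real.exp θ * E := by
          gcongr; linarith [Real.add_one_le_exp θ]
      _ = Real.exp (θ + (2 * s + 2 * θ)) := by rw [hE, ← Real.exp_add]
      _ ≤ _ := Real.exp_le_exp.2 (by rw [hstep]; nlinarith)
  have hsmall : Real.exp (s + θ - 1) ≤ E := Real.exp_le_exp.2 (by nlinarith)
  refine ⟨by positivity, ?_⟩
  nlinarith

/-- For the Poisson regression example (X, Y independent Poisson(1),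
∂_θ f(θ,(x,y)) = −x·y + x·exp(θ·x), F(θ) = −θ + exp(exp(θ)−1),
F'(θ) = −1 + exp(exp(θ)+θ−1)): for every α ∈ (0,1] and every ε > 0,
liminf_{θ→∞} 𝓛_{α,ε}(θ)·G_α(θ) / (F(θ) + |F'(θ)|²) = ∞, where
G_α(θ) := E[|∂_θ f(θ,Z)|^{1+α}] and 𝓛_{α,ε}(θ) is the smallest constant L ∈ (0,∞) such
that |F'(θ) − F'(θ')| ≤ L·|θ−θ'|^α for all θ' with |θ'−θ| ≤ (max(G_α(θ),ε))^{1/(1+α)}.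
(Equivalently, the ratio tends to +∞ as θ → ∞.) -/
theorem stmt3
    {Ω : Type*} [MeasureSpace Ω] [IsProbabilityMeasure (ℙ : Measure Ω)]
    (X Y : Ω → ℕ) (hXm : Measurable X) (hYm : Measurable Y)
    (hindep : IndepFun X Y ℙ)
    (hX : ∀ k : ℕ, ℙ {ω | X ω = k} = ENNReal.ofReal (Real.exp (-1) / (Nat.factorial k)))
    (hY : ∀ k : ℕ, ℙ {ω | Y ω = k} = ENNReal.ofReal (Real.exp (-1) / (Nat.factorial k)))
    (F F' : ℝ → ℝ)
    (hF : ∀ θ : ℝ, F θ = -θ + Real.exp (Real.exp θ - 1))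
    (hF' : ∀ θ : ℝ, F' θ = -1 + Real.exp (Real.exp θ + θ - 1))
    (α : ℝ) (hα : α ∈ Set.Ioc (0 : ℝ) 1) (ε : ℝ) (hε : 0 < ε)
    (G : ℝ → ℝ)
    (hG : ∀ θ : ℝ,
      G θ = ∫ ω, |(-(X ω : ℝ) * (Y ω : ℝ) + (X ω : ℝ) * Real.exp (θ * (X ω : ℝ)))| ^ (1 + α) ∂ℙ)
    (L : ℝ → ℝ)
    (hL : ∀ θ : ℝ,
      L θ = sInf {l : ℝ | 0 < l ∧ ∀ θ' : ℝ, |θ' - θ| ≤ (max (G θ) ε) ^ ((1 : ℝ) / (1 + α)) →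
        |F' θ - F' θ'| ≤ l * |θ - θ'| ^ α}) :
    Tendsto (fun θ : ℝ => L θ * G θ / (F θ + |F' θ| ^ 2)) atTop atTop := by
  have hcd : ContDiff ℝ 1 F' := by
    rw [funext hF']
    fun_prop
  refine tendsto_atTop_mono' atTop ?_ (tendsto_id.atTop_div_const (r := (4 : ℝ)) (by norm_num))
  filter_upwards [eventually_ge_atTop (6 : ℝ)] with θ hθ
  have hG1 : 1 ≤ G θ := by
    rw [hG]
    exact one_le_integral_poisson_gradient_rpow hXm hYm hindep hX hY hα (by linarith)
  have hradius : 1 ≤ (max (G θ) ε) ^ ((1 : ℝ) / (1 + α)) :=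
    Real.one_le_rpow (hG1.trans (le_max_left _ _)) (by have := hα.1; positivity)
  have hLlow : F' (θ + 1) - F' θ ≤ L θ := by
    rw [hL]
    refine le_csInf (exists_holder_constant_of_contDiff hcd hα θ _) fun l hl => ?_
    have h := hl.2 (θ + 1) (by simpa using hradius)
    rw [abs_sub_comm] at h
    simpa using (le_abs_self _).trans h
  obtain ⟨hpos, hratio⟩ := poisson_increment_ratio_ge hθ
  rw [← hF, ← hF'] at hpos
  rw [← hF, ← hF' θ, ← hF'] at hratio
  rw [id, le_div_iff₀ hpos]
  have hL0 : 0 ≤ L θ := (mul_nonneg (by linarith) hpos.le).trans (hratio.trans hLlow)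
  exact (hratio.trans hLlow).trans (le_mul_of_one_le_right hL0 hG1)
end

section
/- Let g : ℝ^d → ℝ be differentiable, x₀ ∈ ℝ^d, and let (x_t)_{t≥0} be defined by x_t = x_{t−1} − v_t·∇g(x_{t−1}) for step sizes (v_t)_{t≥1} satisfying, for some constant c > 0, g(x_t) ≤ g(x_{t−1}) − (v_t/2)·‖∇g(x_{t−1})‖² and v_t ≥ c for all t ≥ 1. Suppose there is a convex set K ⊆ ℝ^d such that x_t ∈ K for all t ≥ 0, g is convex on K, and there exists x⋆ ∈ K with g(x⋆) = inf_{x∈K} g(x). Then g(x_T) − g(x⋆) ≤ ‖x₀ − x⋆‖² / (2cT) for every T ≥ 1. -/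
open Filter

/-- First-order characterization of convexity: a function that is convex on `K` lies above its
tangent hyperplanes on `K`. -/
theorem ConvexOn.add_fderiv_sub_le {E : Type*} [NormedAddCommGroup E] [NormedSpace ℝ E]
    {K : Set E} {g : E → ℝ} (hconv : ConvexOn ℝ K g) {x y : E} (hx : x ∈ K) (hy : y ∈ K)
    (hg : DifferentiableAt ℝ g x) : g x + fderiv ℝ g x (y - x) ≤ g y := by
  have hline : ConvexOn ℝ (AffineMap.lineMap x y ⁻¹' K) (g ∘ (AffineMap.lineMap x y : ℝ →ᵃ[ℝ] E)) :=
    hconv.comp_affineMap _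
  have hderiv : HasDerivAt (g ∘ (AffineMap.lineMap x y : ℝ →ᵃ[ℝ] E)) (fderiv ℝ g x (y - x)) 0 := by
    refine HasFDerivAt.comp_hasDerivAt 0 ?_ AffineMap.hasDerivAt_lineMap
    simpa using hg.hasFDerivAt
  have hslope := hline.le_slope_of_hasDerivAt (x := 0) (y := 1) (by simpa) (by simpa)
    zero_lt_one hderiv
  simp only [slope_def_field, Function.comp_apply, AffineMap.lineMap_apply_zero,
    AffineMap.lineMap_apply_one, sub_zero, div_one] at hslope
  linarith

/-- One gradient step of size `w` with sufficient decrease on a convex function moves the iterate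
closer to any point `z` of `K`, by an amount controlled by the new gap `g x' - g z`. -/
theorem ConvexOn.two_mul_gap_add_sq_dist_le {E : Type*} [NormedAddCommGroup E]
    [InnerProductSpace ℝ E] [CompleteSpace E] {K : Set E} {g : E → ℝ} (hconv : ConvexOn ℝ K g)
    {x x' z : E} {w : ℝ} (hw : 0 ≤ w) (hx : x ∈ K) (hz : z ∈ K) (hg : DifferentiableAt ℝ g x)
    (hstep : x' = x - w • gradient g x) (hdec : g x' ≤ g x - w / 2 * ‖gradient g x‖ ^ 2) :
    2 * w * (g x' - g z) + ‖x' - z‖ ^ 2 ≤ ‖x - z‖ ^ 2 := by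
  have htangent := hconv.add_fderiv_sub_le hx hz hg
  rw [← inner_gradient_left, ← neg_sub x z, inner_neg_right, real_inner_comm] at htangent
  have hexpand : ‖x' - z‖ ^ 2 = ‖x - z‖ ^ 2 - 2 * w * inner ℝ (x - z) (gradient g x)
      + w ^ 2 * ‖gradient g x‖ ^ 2 := by
    rw [hstep, sub_right_comm, norm_sub_sq_real, inner_smul_right, norm_smul, mul_pow,
      Real.norm_eq_abs, sq_abs]
    ring
  have hgap : g x' - g z ≤ inner ℝ (x - z) (gradient g x) - w / 2 * ‖gradient g x‖ ^ 2 := by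
    linarith
  have := mul_le_mul_of_nonneg_left hgap (by positivity : 0 ≤ 2 * w)
  linarith

/-- convergence of gradient descent with lower-bounded step sizes
satisfying sufficient decrease. Let g : ℝ^d → ℝ be differentiable, and let
x_t = x_{t−1} − v_t∇g(x_{t−1}) with g(x_t) ≤ g(x_{t−1}) − (v_t/2)‖∇g(x_{t−1})‖² and
v_t ≥ c > 0 for all t ≥ 1. If all iterates stay in a convex set K on which g is convex and
g attains its infimum over K at x⋆ ∈ K, then g(x_T) − g(x⋆) ≤ ‖x₀ − x⋆‖²/(2cT) for all
T ≥ 1. -/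
theorem stmt12 {d : ℕ}
    (g : EuclideanSpace ℝ (Fin d) → ℝ) (hg : Differentiable ℝ g)
    (x : ℕ → EuclideanSpace ℝ (Fin d)) (v : ℕ → ℝ) (c : ℝ) (hc : 0 < c)
    (hupd : ∀ t : ℕ, 1 ≤ t → x t = x (t - 1) - v t • gradient g (x (t - 1)))
    (hdec : ∀ t : ℕ, 1 ≤ t →
      g (x t) ≤ g (x (t - 1)) - v t / 2 * ‖gradient g (x (t - 1))‖ ^ 2)
    (hv : ∀ t : ℕ, 1 ≤ t → c ≤ v t)
    (K : Set (EuclideanSpace ℝ (Fin d))) (hK : Convex ℝ K)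
    (hxK : ∀ t : ℕ, x t ∈ K)
    (hconv : ConvexOn ℝ K g)
    (xstar : EuclideanSpace ℝ (Fin d)) (hxstar : xstar ∈ K)
    (hmin : ∀ y ∈ K, g xstar ≤ g y) :
    ∀ T : ℕ, 1 ≤ T → g (x T) - g xstar ≤ ‖x 0 - xstar‖ ^ 2 / (2 * c * T) := by
  have hsum : ∀ T : ℕ,
      2 * c * T * (g (x T) - g xstar) + ‖x T - xstar‖ ^ 2 ≤ ‖x 0 - xstar‖ ^ 2 := by
    intro T
    induction T with
    | zero => simp
    | succ T ih =>
      have hupd' := hupd (T + 1) (by simp)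
      have hdec' := hdec (T + 1) (by simp)
      have hv' := hv (T + 1) (by simp)
      rw [Nat.add_sub_cancel] at hupd' hdec'
      have hstep := hconv.two_mul_gap_add_sq_dist_le (hc.le.trans hv') (hxK T) hxstar (hg _)
        hupd' hdec'
      have hdescent : g (x (T + 1)) - g xstar ≤ g (x T) - g xstar := by
        have : 0 ≤ v (T + 1) / 2 * ‖gradient g (x T)‖ ^ 2 :=
          mul_nonneg (by linarith) (by positivity)
        linarith
      have hold := mul_le_mul_of_nonneg_left hdescent (by positivity : 0 ≤ 2 * c * T)
      have hnew := mul_le_mul_of_nonneg_right hv' (sub_nonneg.2 (hmin _ (hxK (T + 1))))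
      push_cast
      linarith
  intro T hT
  have hT' : (0 : ℝ) < T := by exact_mod_cast hT
  rw [le_div_iff₀ (by positivity)]
  linarith [hsum T, sq_nonneg ‖x T - xstar‖]
end

section
/- Let g : ℝ^d → ℝ be differentiable, x₀ ∈ ℝ^d, β ∈ (0,1), and let the iterates be x_t = x_{t−1} − v_t·∇g(x_{t−1}), where v_t = β^{k_t} with k_t the smallest k ∈ ℕ₀ satisfying the backtracking (Armijo) condition g(x_{t−1} − β^k·∇g(x_{t−1})) ≤ g(x_{t−1}) − (β^k/2)·‖∇g(x_{t−1})‖². Let K̃ ⊆ ℝ^d be a convex set containing the sublevel set {x ∈ ℝ^d : g(x) ≤ g(x₀)}, and let K = { x ∈ ℝ^d : ∃ x' ∈ K̃ with ‖x − x'‖ ≤ sup_{x̃∈K̃} ‖∇g(x̃)‖ }. If g is convex on K and there is a constant L_K ∈ [1,∞) with ‖∇g(x) − ∇g(x')‖ ≤ L_K·‖x − x'‖ for all x, x' ∈ K, then for every t ≥ 1 the backtracking step is well defined and satisfies v_t ≥ β/L_K, and g(x_t) ≤ g(x_{t−1}) − (v_t/2)·‖∇g(x_{t−1})‖². -/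
/-- The set of exponents k for which the Armijo (backtracking) condition holds at `y`
with candidate step size β^k:  g(y − β^k∇g(y)) ≤ g(y) − (β^k/2)‖∇g(y)‖². -/
def armijoSet {d : ℕ} (g : EuclideanSpace ℝ (Fin d) → ℝ) (β : ℝ)
    (y : EuclideanSpace ℝ (Fin d)) : Set ℕ :=
  {k : ℕ | g (y - β ^ k • gradient g y) ≤ g y - β ^ k / 2 * ‖gradient g y‖ ^ 2}

/-- The backtracking line search step size at `y`: β^k with k the smallest natural number
satisfying the Armijo condition (junk value β^0 if no such k exists). -/
noncomputable def btStep {d : ℕ} (g : EuclideanSpace ℝ (Fin d) → ℝ) (β : ℝ)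
    (y : EuclideanSpace ℝ (Fin d)) : ℝ :=
  β ^ sInf (armijoSet g β y)

/-- The iterates of gradient descent with backtracking line search started at `x0`. -/
noncomputable def btIter {d : ℕ} (g : EuclideanSpace ℝ (Fin d) → ℝ) (β : ℝ)
    (x0 : EuclideanSpace ℝ (Fin d)) : ℕ → EuclideanSpace ℝ (Fin d)
  | 0 => x0
  | (t + 1) => btIter g β x0 t - btStep g β (btIter g β x0 t) • gradient g (btIter g β x0 t)

/-- The descent lemma on a segment: if the gradient of `g` is `L`-Lipschitz relative to the base
point `y` along the segment from `y` to `y + p`, then `g` lies below its quadratic model. -/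
theorem le_quadratic_of_gradient_lipschitz_segment {E : Type*} [NormedAddCommGroup E] [InnerProductSpace ℝ E]
    [CompleteSpace E] {g : E → ℝ} (hg : Differentiable ℝ g) {y p : E} {L : ℝ}
    (hL : ∀ s ∈ Set.Icc (0 : ℝ) 1,
      ‖gradient g (y + s • p) - gradient g y‖ ≤ L * ‖s • p‖) :
    g (y + p) ≤ g y + inner ℝ (gradient g y) p + L / 2 * ‖p‖ ^ 2 := by
  let ψ : ℝ → ℝ := fun s ↦
    g (y + s • p) - (s * inner ℝ (gradient g y) p + s ^ 2 * (L / 2 * ‖p‖ ^ 2))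
  have hψ (s : ℝ) : HasDerivAt ψ (inner ℝ (gradient g (y + s • p)) p -
      (inner ℝ (gradient g y) p + s * (L * ‖p‖ ^ 2))) s := by
    have hline : HasDerivAt (fun s : ℝ ↦ y + s • p) p s := by
      simpa using ((hasDerivAt_id s).smul_const p).const_add y
    have hcomp := (hg (y + s • p)).hasGradientAt.hasFDerivAt.comp_hasDerivAt s hline
    have hquad := ((hasDerivAt_id s).mul_const (inner ℝ (gradient g y) p)).add
      (((hasDerivAt_id s).pow 2).mul_const (L / 2 * ‖p‖ ^ 2))
    refine (hcomp.sub hquad).congr_deriv ?_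
    simp only [InnerProductSpace.toDual_apply_apply, id]
    push_cast
    ring
  have hanti : AntitoneOn ψ (Set.Icc 0 1) := by
    refine antitoneOn_of_hasDerivWithinAt_nonpos (convex_Icc 0 1)
      (fun s _ ↦ (hψ s).continuousAt.continuousWithinAt)
      (fun s _ ↦ (hψ s).hasDerivWithinAt) fun s hs ↦ ?_
    have hs' := interior_subset hs
    have hcs := real_inner_le_norm (gradient g (y + s • p) - gradient g y) p
    have hmul := mul_le_mul_of_nonneg_right (hL s hs') (norm_nonneg p)
    rw [norm_smul, Real.norm_of_nonneg hs'.1] at hmul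
    rw [inner_sub_left] at hcs
    nlinarith
  have h01 := hanti (Set.left_mem_Icc.2 zero_le_one) (Set.right_mem_Icc.2 zero_le_one) zero_le_one
  simp only [ψ, one_smul, zero_smul, add_zero] at h01
  linarith

/-- If the gradient of `g` is `L`-Lipschitz relative to `y` along the unit gradient step, every
exponent `k` with `β ^ k * L ≤ 1` satisfies the Armijo condition. -/
theorem mem_armijoSet_of_pow_mul_le_one {d : ℕ} {g : EuclideanSpace ℝ (Fin d) → ℝ}
    (hg : Differentiable ℝ g) {β : ℝ} (hβ : β ∈ Set.Ioo (0 : ℝ) 1)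
    {y : EuclideanSpace ℝ (Fin d)} {L : ℝ}
    (hL : ∀ s ∈ Set.Icc (0 : ℝ) 1,
      ‖gradient g (y - s • gradient g y) - gradient g y‖ ≤ L * ‖s • gradient g y‖)
    {k : ℕ} (hk : β ^ k * L ≤ 1) : k ∈ armijoSet g β y := by
  have hpos : 0 < β ^ k := pow_pos hβ.1 k
  have hle : β ^ k ≤ 1 := pow_le_one₀ hβ.1.le hβ.2.le
  have hdesc := le_quadratic_of_gradient_lipschitz_segment hg (y := y)
    (p := -(β ^ k • gradient g y)) (L := L) fun s hs ↦ by
    have := hL (s * β ^ k) ⟨mul_nonneg hs.1 hpos.le, mul_le_one₀ hs.2 hpos.le hle⟩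
    simpa only [smul_neg, norm_neg, smul_smul, ← sub_eq_add_neg] using this
  rw [← sub_eq_add_neg, inner_neg_right, real_inner_smul_right, real_inner_self_eq_norm_sq,
    norm_neg, norm_smul, Real.norm_of_nonneg hpos.le] at hdesc
  have hstep := mul_le_mul_of_nonneg_right hk
    (mul_nonneg hpos.le (sq_nonneg ‖gradient g y‖))
  change g (y - β ^ k • gradient g y) ≤ g y - β ^ k / 2 * ‖gradient g y‖ ^ 2
  nlinarith

/-- Backtracking terminates with step size at least `β / L` once all exponents `k` with
`β ^ k * L ≤ 1` are accepted. -/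
theorem armijoSet_nonempty_and_le_btStep {d : ℕ} {g : EuclideanSpace ℝ (Fin d) → ℝ}
    {β : ℝ} (hβ : β ∈ Set.Ioo (0 : ℝ) 1) {y : EuclideanSpace ℝ (Fin d)} {L : ℝ} (hL : 1 ≤ L)
    (h : ∀ k : ℕ, β ^ k * L ≤ 1 → k ∈ armijoSet g β y) :
    (armijoSet g β y).Nonempty ∧ β / L ≤ btStep g β y := by
  have hL0 : 0 < L := one_pos.trans_le hL
  constructor
  · obtain ⟨k, hk⟩ := exists_pow_lt_of_lt_one (one_div_pos.2 hL0) hβ.2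
    exact ⟨k, h k ((le_div_iff₀ hL0).1 hk.le)⟩
  · rw [btStep, div_le_iff₀ hL0]
    rcases hk : sInf (armijoSet g β y) with _ | k
    · simpa using hβ.2.le.trans hL
    · have hnot : k ∉ armijoSet g β y := Nat.notMem_of_lt_sInf (by omega)
      have hlt : 1 < β ^ k * L := not_le.1 fun hle ↦ hnot (h k hle)
      rw [pow_succ]
      nlinarith [hβ.1]

/-- validity of backtracking line search. Let g : ℝ^d → ℝ be
differentiable, β ∈ (0,1), K̃ a convex set containing the sublevel set {g ≤ g(x₀)}, and
K = {x | ∃ x' ∈ K̃, ‖x − x'‖ ≤ sup_{x̃∈K̃}‖∇g(x̃)‖} (the supremum is taken in [0,∞], so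
K = ℝ^d if it is infinite). If g is convex on K and ∇g is L_K-Lipschitz on K with
L_K ∈ [1,∞), then for every t ≥ 1 the backtracking step at x_{t−1} is well defined (some
k ∈ ℕ satisfies the Armijo condition), the chosen step size satisfies v_t ≥ β/L_K, and
g(x_t) ≤ g(x_{t−1}) − (v_t/2)‖∇g(x_{t−1})‖². -/
theorem stmt13 {d : ℕ}
    (g : EuclideanSpace ℝ (Fin d) → ℝ) (hg : Differentiable ℝ g)
    (x0 : EuclideanSpace ℝ (Fin d)) (β : ℝ) (hβ : β ∈ Set.Ioo (0 : ℝ) 1)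
    (Kt : Set (EuclideanSpace ℝ (Fin d))) (hKt : Convex ℝ Kt)
    (hsub : {x | g x ≤ g x0} ⊆ Kt)
    (K : Set (EuclideanSpace ℝ (Fin d)))
    (hKdef : K = {x | ∃ x' ∈ Kt,
      ENNReal.ofReal ‖x - x'‖ ≤ ⨆ y : Kt, ENNReal.ofReal ‖gradient g (y : EuclideanSpace ℝ (Fin d))‖})
    (hconv : ConvexOn ℝ K g)
    (L : ℝ) (hL : 1 ≤ L)
    (hLip : ∀ x ∈ K, ∀ x' ∈ K, ‖gradient g x - gradient g x'‖ ≤ L * ‖x - x'‖) :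
    ∀ t : ℕ, 1 ≤ t →
      (armijoSet g β (btIter g β x0 (t - 1))).Nonempty ∧
      β / L ≤ btStep g β (btIter g β x0 (t - 1)) ∧
      g (btIter g β x0 t) ≤ g (btIter g β x0 (t - 1)) -
        btStep g β (btIter g β x0 (t - 1)) / 2 *
          ‖gradient g (btIter g β x0 (t - 1))‖ ^ 2 := by
  have hlip_step (y : EuclideanSpace ℝ (Fin d)) (hy : g y ≤ g x0) (s : ℝ)
      (hs : s ∈ Set.Icc (0 : ℝ) 1) :
      ‖gradient g (y - s • gradient g y) - gradient g y‖ ≤ L * ‖s • gradient g y‖ := by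
    have hmem (r : ℝ) (hr : r ∈ Set.Icc (0 : ℝ) 1) : y - r • gradient g y ∈ K := by
      rw [hKdef]
      refine ⟨y, hsub hy, le_trans (ENNReal.ofReal_le_ofReal ?_)
        (le_iSup (fun z : Kt ↦ ENNReal.ofReal ‖gradient g (z : EuclideanSpace ℝ (Fin d))‖)
          ⟨y, hsub hy⟩)⟩
      rw [sub_sub_cancel_left, norm_neg, norm_smul, Real.norm_of_nonneg hr.1]
      exact mul_le_of_le_one_left (norm_nonneg _) hr.2
    have hyK : y ∈ K := by simpa using hmem 0 (Set.left_mem_Icc.2 zero_le_one)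
    simpa using hLip _ (hmem s hs) y hyK
  have hstep (y : EuclideanSpace ℝ (Fin d)) (hy : g y ≤ g x0) :=
    armijoSet_nonempty_and_le_btStep (g := g) hβ hL fun _ hk ↦
      mem_armijoSet_of_pow_mul_le_one hg hβ (hlip_step y hy) hk
  have hdecr (y : EuclideanSpace ℝ (Fin d)) (hy : g y ≤ g x0) :
      g (y - btStep g β y • gradient g y) ≤ g y - btStep g β y / 2 * ‖gradient g y‖ ^ 2 :=
    Nat.sInf_mem (hstep y hy).1
  have hsublevel (t : ℕ) : g (btIter g β x0 t) ≤ g x0 := by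
    induction t with
    | zero => exact le_rfl
    | succ t ih =>
      have hv : 0 < btStep g β (btIter g β x0 t) := pow_pos hβ.1 _
      exact (hdecr _ ih).trans ((sub_le_self _ (by positivity)).trans ih)
  rintro (_ | t) ht
  · omega
  · exact ⟨(hstep _ (hsublevel t)).1, (hstep _ (hsublevel t)).2, hdecr _ (hsublevel t)⟩
end
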